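/- Quantitative sphere of influence for kernel locations: let f be the SparKer model with Gaussian kernels of width σ > 0, let α ∈ (0, e^{−1/2}], and let x ∈ ℝ^d satisfy k_{μ_l}^σ(x) ≤ α for every l = 1,…,M. Then the gradient of f(x) with respect to the i-th kernel location satisfies ‖∂f(x)/∂μ_i‖ ≤ (α/σ²) · [ (2|a_i| + Σ_{j=1}^M |a_j|) · σ√(2 ln(1/α)) + Σ_{j=1}^M |a_j| · ‖μ_i − μ_j‖ ]. In particular the influence of points outside every kernel's radial α-level on the location dynamics tends to 0 linearly in α. -/

import Mathlib

open Real Finset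

/-- Gaussian kernel with location `μ` and width `σ`. -/
noncomputable def gaussKernel {d : ℕ} (σ : ℝ) (μ x : EuclideanSpace ℝ (Fin d)) : ℝ :=
  Real.exp (-‖x - μ‖ ^ 2 / (2 * σ ^ 2))

/-- SoftMax activation of the `i`-th kernel in the SparKer ensemble. -/
noncomputable def softmaxAct {d M : ℕ} (σ : ℝ) (μ : Fin M → EuclideanSpace ℝ (Fin d))
    (i : Fin M) (x : EuclideanSpace ℝ (Fin d)) : ℝ :=
  gaussKernel σ (μ i) x / ∑ j, gaussKernel σ (μ j) x

/-- The SparKer model: sparse ensemble of Gaussian kernels with SoftMax competition. -/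
noncomputable def sparker {d M : ℕ} (σ : ℝ) (μ : Fin M → EuclideanSpace ℝ (Fin d))
    (a : Fin M → ℝ) (x : EuclideanSpace ℝ (Fin d)) : ℝ :=
  ∑ i, a i * (softmaxAct σ μ i x * gaussKernel σ (μ i) x)

/-!
The radial profile `r ↦ exp (-r² / (2σ²)) * r` decreases on `[σ, ∞)`, and `α ≤ e^{-1/2}` says
exactly that the radius `R` at which a kernel drops to `α` is at least `σ`. Hence
`k_{μ_j}(x) ‖x - μ_j‖ ≤ α R` for every `j`. Since activations lie in `[0, 1]`, the gradient is
controlled by the products `k_{μ_j}(x) ‖x - μ_i‖`, and the triangle inequality through `μ_j`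
bounds each of these by `α (R + ‖μ_i - μ_j‖)`.
-/

theorem hasDerivAt_exp_neg_sq_div_mul_self (σ r : ℝ) :
    HasDerivAt (fun r : ℝ ↦ exp (-r ^ 2 / (2 * σ ^ 2)) * r)
      (exp (-r ^ 2 / (2 * σ ^ 2)) * (1 - r ^ 2 / σ ^ 2)) r := by
  have exponent : HasDerivAt (fun r : ℝ ↦ -r ^ 2 / (2 * σ ^ 2)) (-(2 * r) / (2 * σ ^ 2)) r := by
    simpa using (hasDerivAt_pow 2 r).fun_neg.div_const (2 * σ ^ 2)
  exact (exponent.exp.fun_mul (hasDerivAt_id' r)).congr_deriv (by ring)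

theorem antitoneOn_exp_neg_sq_div_mul_self {σ : ℝ} (hσ : 0 < σ) :
    AntitoneOn (fun r : ℝ ↦ exp (-r ^ 2 / (2 * σ ^ 2)) * r) (Set.Ici σ) := by
  refine antitoneOn_of_hasDerivWithinAt_nonpos (convex_Ici σ)
    (fun r _ ↦ (hasDerivAt_exp_neg_sq_div_mul_self σ r).continuousAt.continuousWithinAt)
    (fun r _ ↦ (hasDerivAt_exp_neg_sq_div_mul_self σ r).hasDerivWithinAt) fun r hr ↦ ?_
  have one_le_ratio : 1 ≤ r ^ 2 / σ ^ 2 := by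
    rw [one_le_div (by positivity)]
    exact pow_le_pow_left₀ hσ.le (interior_subset hr) 2
  exact mul_nonpos_of_nonneg_of_nonpos (exp_pos _).le (sub_nonpos.2 one_le_ratio)

/-- The distance from its location at which a Gaussian kernel of width `σ` takes the value `α`,
for `α ∈ (0, 1]`; it is `0` for `α ≥ 1`, where the square root is taken of a nonpositive number. -/
noncomputable def levelRadius (σ α : ℝ) : ℝ :=
  σ * √(2 * log (1 / α))

theorem exp_neg_levelRadius_sq_div {σ α : ℝ} (hσ : σ ≠ 0) (hα : 0 < α) (hα_one : α ≤ 1) :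
    exp (-levelRadius σ α ^ 2 / (2 * σ ^ 2)) = α := by
  have log_nonneg : 0 ≤ log (1 / α) := Real.log_nonneg (one_le_one_div hα hα_one)
  have exponent_eq_log : -levelRadius σ α ^ 2 / (2 * σ ^ 2) = log α := by
    rw [levelRadius, mul_pow, sq_sqrt (by positivity), one_div, log_inv]
    field_simp
  rw [exponent_eq_log, exp_log hα]

theorem le_levelRadius {σ α : ℝ} (hσ : 0 ≤ σ) (hα : 0 < α) (hα_le : α ≤ exp (-(1 / 2))) :
    σ ≤ levelRadius σ α := by
  have log_le : log α ≤ -(1 / 2) := (log_le_iff_le_exp hα).2 hα_le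
  refine le_mul_of_one_le_right hσ (one_le_sqrt.2 ?_)
  rw [one_div, log_inv]
  linarith

section Kernel

variable {d : ℕ} {σ α : ℝ} {μ x : EuclideanSpace ℝ (Fin d)}

theorem gaussKernel_pos (σ : ℝ) (μ x : EuclideanSpace ℝ (Fin d)) : 0 < gaussKernel σ μ x :=
  exp_pos _

theorem gaussKernel_le_iff_levelRadius_le (hσ : 0 < σ) (hα : 0 < α) :
    gaussKernel σ μ x ≤ α ↔ levelRadius σ α ≤ ‖x - μ‖ := by
  rw [gaussKernel, ← le_log_iff_exp_le hα, levelRadius, ← le_div_iff₀' hσ,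
    sqrt_le_left (by positivity), one_div, log_inv, div_pow, div_le_iff₀ (by positivity),
    le_div_iff₀ (by positivity)]
  constructor <;> intro h <;> linarith

theorem gaussKernel_mul_norm_sub_le (hσ : 0 < σ) (hα_le : α ≤ exp (-(1 / 2)))
    (hx : gaussKernel σ μ x ≤ α) :
    gaussKernel σ μ x * ‖x - μ‖ ≤ α * levelRadius σ α := by
  have hα : 0 < α := (gaussKernel_pos σ μ x).trans_le hx
  have hα_one : α ≤ 1 := hα_le.trans (exp_le_one_iff.2 (by norm_num))
  have σ_le_radius : σ ≤ levelRadius σ α := le_levelRadius hσ.le hα hα_le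
  have radius_le_norm : levelRadius σ α ≤ ‖x - μ‖ :=
    (gaussKernel_le_iff_levelRadius_le hσ hα).1 hx
  calc gaussKernel σ μ x * ‖x - μ‖
      ≤ exp (-levelRadius σ α ^ 2 / (2 * σ ^ 2)) * levelRadius σ α :=
        antitoneOn_exp_neg_sq_div_mul_self hσ σ_le_radius (σ_le_radius.trans radius_le_norm)
          radius_le_norm
    _ = α * levelRadius σ α := by rw [exp_neg_levelRadius_sq_div hσ.ne' hα hα_one]

theorem gaussKernel_mul_norm_sub_le_add (hσ : 0 < σ) (hα_le : α ≤ exp (-(1 / 2)))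
    (hx : gaussKernel σ μ x ≤ α) (y : EuclideanSpace ℝ (Fin d)) :
    gaussKernel σ μ x * ‖x - y‖ ≤ α * (levelRadius σ α + ‖y - μ‖) := by
  have triangle : ‖x - y‖ ≤ ‖x - μ‖ + ‖y - μ‖ := by
    simpa only [dist_eq_norm] using dist_triangle_right x y μ
  calc gaussKernel σ μ x * ‖x - y‖
      ≤ gaussKernel σ μ x * (‖x - μ‖ + ‖y - μ‖) :=
        mul_le_mul_of_nonneg_left triangle (gaussKernel_pos σ μ x).le
    _ = gaussKernel σ μ x * ‖x - μ‖ + gaussKernel σ μ x * ‖y - μ‖ := mul_add _ _ _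
    _ ≤ α * levelRadius σ α + α * ‖y - μ‖ :=
        add_le_add (gaussKernel_mul_norm_sub_le hσ hα_le hx)
          (mul_le_mul_of_nonneg_right hx (norm_nonneg _))
    _ = α * (levelRadius σ α + ‖y - μ‖) := (mul_add _ _ _).symm

end Kernel

section Ensemble

variable {d M : ℕ} {σ α : ℝ} {μ : Fin M → EuclideanSpace ℝ (Fin d)}
  {x : EuclideanSpace ℝ (Fin d)}

theorem softmaxAct_nonneg (σ : ℝ) (μ : Fin M → EuclideanSpace ℝ (Fin d)) (i : Fin M)
    (x : EuclideanSpace ℝ (Fin d)) : 0 ≤ softmaxAct σ μ i x :=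
  div_nonneg (gaussKernel_pos σ (μ i) x).le (sum_nonneg fun j _ ↦ (gaussKernel_pos σ (μ j) x).le)

theorem softmaxAct_le_one (σ : ℝ) (μ : Fin M → EuclideanSpace ℝ (Fin d)) (i : Fin M)
    (x : EuclideanSpace ℝ (Fin d)) : softmaxAct σ μ i x ≤ 1 := by
  have kernel_nonneg (j : Fin M) : 0 ≤ gaussKernel σ (μ j) x := (gaussKernel_pos σ (μ j) x).le
  exact div_le_one_of_le₀
    (single_le_sum (f := fun j ↦ gaussKernel σ (μ j) x) (fun j _ ↦ kernel_nonneg j) (mem_univ i))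
    (sum_nonneg fun j _ ↦ kernel_nonneg j)

theorem abs_sparker_le_sum (σ : ℝ) (μ : Fin M → EuclideanSpace ℝ (Fin d)) (a : Fin M → ℝ)
    (x : EuclideanSpace ℝ (Fin d)) :
    |sparker σ μ a x| ≤ ∑ j, |a j| * gaussKernel σ (μ j) x := by
  refine (abs_sum_le_sum_abs _ _).trans (sum_le_sum fun j _ ↦ ?_)
  have kernel_nonneg : 0 ≤ gaussKernel σ (μ j) x := (gaussKernel_pos σ (μ j) x).le
  rw [abs_mul, abs_of_nonneg (mul_nonneg (softmaxAct_nonneg σ μ j x) kernel_nonneg)]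
  exact mul_le_mul_of_nonneg_left
    (mul_le_of_le_one_left kernel_nonneg (softmaxAct_le_one σ μ j x)) (abs_nonneg _)

theorem abs_sparker_mul_norm_sub_le (hσ : 0 < σ) (hα_le : α ≤ exp (-(1 / 2)))
    (hx : ∀ l, gaussKernel σ (μ l) x ≤ α) (a : Fin M → ℝ) (y : EuclideanSpace ℝ (Fin d)) :
    |sparker σ μ a x| * ‖x - y‖ ≤
      α * ((∑ j, |a j|) * levelRadius σ α + ∑ j, |a j| * ‖y - μ j‖) := by
  calc |sparker σ μ a x| * ‖x - y‖
      ≤ (∑ j, |a j| * gaussKernel σ (μ j) x) * ‖x - y‖ :=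
        mul_le_mul_of_nonneg_right (abs_sparker_le_sum σ μ a x) (norm_nonneg _)
    _ = ∑ j, |a j| * (gaussKernel σ (μ j) x * ‖x - y‖) := by simp only [sum_mul, mul_assoc]
    _ ≤ ∑ j, |a j| * (α * (levelRadius σ α + ‖y - μ j‖)) :=
        sum_le_sum fun j _ ↦ mul_le_mul_of_nonneg_left
          (gaussKernel_mul_norm_sub_le_add hσ hα_le (hx j) y) (abs_nonneg _)
    _ = α * ((∑ j, |a j|) * levelRadius σ α + ∑ j, |a j| * ‖y - μ j‖) := by
        simp only [mul_left_comm _ α, ← mul_sum, mul_add, sum_add_distrib, sum_mul]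

theorem abs_two_mul_gaussKernel_sub_sparker_mul_norm_sub_le (hσ : 0 < σ)
    (hα_le : α ≤ exp (-(1 / 2))) (hx : ∀ l, gaussKernel σ (μ l) x ≤ α) (a : Fin M → ℝ)
    (i : Fin M) :
    |2 * a i * gaussKernel σ (μ i) x - sparker σ μ a x| * ‖x - μ i‖ ≤
      α * ((2 * |a i| + ∑ j, |a j|) * levelRadius σ α + ∑ j, |a j| * ‖μ i - μ j‖) := by
  have abs_own_term : |2 * a i * gaussKernel σ (μ i) x| = 2 * |a i| * gaussKernel σ (μ i) x := by
    rw [abs_mul, abs_mul, abs_two, abs_of_pos (gaussKernel_pos σ (μ i) x)]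
  have own_term_le : 2 * |a i| * (gaussKernel σ (μ i) x * ‖x - μ i‖) ≤
      2 * |a i| * (α * levelRadius σ α) :=
    mul_le_mul_of_nonneg_left (gaussKernel_mul_norm_sub_le hσ hα_le (hx i)) (by positivity)
  calc |2 * a i * gaussKernel σ (μ i) x - sparker σ μ a x| * ‖x - μ i‖
      ≤ (2 * |a i| * gaussKernel σ (μ i) x + |sparker σ μ a x|) * ‖x - μ i‖ :=
        mul_le_mul_of_nonneg_right (abs_own_term ▸ abs_sub _ _) (norm_nonneg _)
    _ = 2 * |a i| * (gaussKernel σ (μ i) x * ‖x - μ i‖) + |sparker σ μ a x| * ‖x - μ i‖ := by ring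
    _ ≤ 2 * |a i| * (α * levelRadius σ α) +
          α * ((∑ j, |a j|) * levelRadius σ α + ∑ j, |a j| * ‖μ i - μ j‖) :=
        add_le_add own_term_le (abs_sparker_mul_norm_sub_le hσ hα_le hx a (μ i))
    _ = α * ((2 * |a i| + ∑ j, |a j|) * levelRadius σ α + ∑ j, |a j| * ‖μ i - μ j‖) := by ring

end Ensemble

/-- quantitative sphere of influence for kernel locations.  If `α ∈ (0, e^{−1/2}]`
and `k_{μ_l}^σ(x) ≤ α` for every `l`, then the location gradient
`∂f(x)/∂μ_i = (1/σ²)(2 a_i k_{μ_i}^σ(x) − f(x)) p_i(x) (x − μ_i)` satisfies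
`‖∂f(x)/∂μ_i‖ ≤ (α/σ²)·[(2|a_i| + Σ_j |a_j|)·σ√(2 ln(1/α)) + Σ_j |a_j|·‖μ_i − μ_j‖]`. -/
theorem location_sphere_of_influence (d M : ℕ) (hd : 1 ≤ d)
    (σ : ℝ) (hσ : 0 < σ) (μ : Fin M → EuclideanSpace ℝ (Fin d)) (a : Fin M → ℝ)
    (i : Fin M) (x : EuclideanSpace ℝ (Fin d))
    (α : ℝ) (hα : 0 < α) (hα' : α ≤ Real.exp (-(1 / 2) : ℝ))
    (hx : ∀ l, gaussKernel σ (μ l) x ≤ α) :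
    ‖((1 / σ ^ 2) * (2 * a i * gaussKernel σ (μ i) x - sparker σ μ a x) *
        softmaxAct σ μ i x) • (x - μ i)‖ ≤
      (α / σ ^ 2) *
        ((2 * |a i| + ∑ j, |a j|) * (σ * Real.sqrt (2 * Real.log (1 / α))) +
          ∑ j, |a j| * ‖μ i - μ j‖) := by
  set residual := 2 * a i * gaussKernel σ (μ i) x - sparker σ μ a x
  have coeff_nonneg : 0 ≤ 1 / σ ^ 2 := by positivity
  rw [norm_smul, norm_eq_abs, abs_mul, abs_mul, abs_of_nonneg coeff_nonneg,
    abs_of_nonneg (softmaxAct_nonneg σ μ i x)]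
  calc 1 / σ ^ 2 * |residual| * softmaxAct σ μ i x * ‖x - μ i‖
      = 1 / σ ^ 2 * (softmaxAct σ μ i x * (|residual| * ‖x - μ i‖)) := by ring
    _ ≤ 1 / σ ^ 2 * (|residual| * ‖x - μ i‖) :=
        mul_le_mul_of_nonneg_left
          (mul_le_of_le_one_left (by positivity) (softmaxAct_le_one σ μ i x)) coeff_nonneg
    _ ≤ 1 / σ ^ 2 * (α * ((2 * |a i| + ∑ j, |a j|) * levelRadius σ α +
          ∑ j, |a j| * ‖μ i - μ j‖)) :=
        mul_le_mul_of_nonneg_left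
          (abs_two_mul_gaussKernel_sub_sparker_mul_norm_sub_le hσ hα' hx a i) coeff_nonneg
    _ = _ := by rw [levelRadius]; ring
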